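/- arXiv:2502.17031 — 2 statements merged into one kernel-verified Lean document; each statement's English description precedes it below -/
import Mathlib

section
/- Let 𝒜 be an essential central arrangement of k ≥ 4 distinct hyperplanes in ℂ⁴ (given by pairwise non-proportional nonzero linear forms α₁,…,α_k that span the dual space) such that 𝒜 has only double intersection lines, i.e., any three of the linear forms α_i are linearly independent. If the derivation module D(𝒜) is a free module over S = ℂ[x,y,z,w], then k = 4. -/
open MvPolynomial

noncomputable section

/-- The polynomial ring `S = ℂ[x,y,z,w]`, with `x = X 0`, `y = X 1`, `z = X 2`, `w = X 3`. -/
abbrev S4 : Type := MvPolynomial (Fin 4) ℂ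

/-- The linear form `c₀·x + c₁·y + c₂·z + c₃·w` with coefficient vector `c`. -/
noncomputable def linForm (c : Fin 4 → ℂ) : S4 := ∑ i, C (c i) * X i

/-- A polynomial derivation `θ = a₁∂ₓ + a₂∂_y + a₃∂_z + a₄∂_w` of `S` is identified with
its coefficient tuple `a : Fin 4 → S`; the linear map `derMap f` sends `a` to `θ(f)`. -/
noncomputable def derMap (f : S4) : (Fin 4 → S4) →ₗ[S4] S4 where
  toFun a := ∑ i, a i * pderiv i f
  map_add' a b := by simp [add_mul, Finset.sum_add_distrib]
  map_smul' c a := by simp [Finset.mul_sum, mul_assoc]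

/-- The derivation module `D(𝒜)` of the central arrangement whose hyperplanes are the kernels
of the linear forms `linForm (α H)`: all derivations `θ` with `θ(α_H) ∈ S·α_H` for every `H`. -/
noncomputable def derivModule {ι : Type} (α : ι → (Fin 4 → ℂ)) :
    Submodule S4 (Fin 4 → S4) :=
  ⨅ H, Submodule.comap (derMap (linForm (α H))) (Ideal.span {linForm (α H)})

end

/-!
A functional on `D(𝒜)` is contraction with a logarithmic one-form `ω = Q⁻¹ F`, where `Q` is the
product of the `α_H`. If all intersections in codimension two are double, then `ω` has a residue
along `α_H = 0` without poles: its numerator is divisible by the restrictions of all the other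
forms, which are pairwise coprime. Hence `ω = ∑ H, g_H dα_H / α_H + (a polynomial one-form)`. If
the linear part of `θ ∈ D(𝒜)` vanishes, then `θ(α_H) / α_H` and the coefficients of `θ` have no
constant term, and so neither has the value of any functional at `θ`. The elements of a basis of
`D(𝒜)` therefore have linearly independent linear parts.

The linear part of a logarithmic derivation has every `α_H` as an eigenvector. Since `D(𝒜)` has
rank `n`, the endomorphisms with this property form a space of dimension at least `n`, so they are
all the endomorphisms that are diagonal in a basis chosen among the `α_H`. A common eigenvector of
these is proportional to an element of the basis, so there are no other hyperplanes.
-/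

section LinearForm

variable {R σ : Type*} [CommRing R] [Fintype σ]

/-- The linear form `∑ i, c i • X i` with coefficient vector `c`, as a linear function of `c`;
it extends `linForm` to any coefficient ring and any finite set of variables. -/
noncomputable def linearForm : (σ → R) →ₗ[R] MvPolynomial σ R := Fintype.linearCombination R X

theorem linearForm_injective : Function.Injective (linearForm : (σ → R) → MvPolynomial σ R) :=
  (linearIndependent_X σ R).fintypeLinearCombination_injective

theorem linearForm_ne_zero {c : σ → R} (hc : c ≠ 0) : linearForm c ≠ 0 :=
  (map_ne_zero_iff _ linearForm_injective).mpr hc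

theorem coeff_single_linearForm_mul (c : σ → R) (p : MvPolynomial σ R) (i : σ) :
    coeff (Finsupp.single i 1) (linearForm c * p) = c i * constantCoeff p := by
  classical
  simp [linearForm, Fintype.linearCombination_apply, Finset.sum_mul, coeff_X_mul',
    coeff_sum, constantCoeff_eq]

theorem coeff_single_linearForm (c : σ → R) (i : σ) :
    coeff (Finsupp.single i 1) (linearForm c) = c i := by
  simpa using coeff_single_linearForm_mul c 1 i

theorem constantCoeff_linearForm (c : σ → R) : constantCoeff (linearForm c) = 0 := by
  simp [linearForm, Fintype.linearCombination_apply]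

theorem isHomogeneous_linearForm (c : σ → R) : (linearForm c).IsHomogeneous 1 :=
  (homogeneousSubmodule σ R 1).sum_mem fun i _ =>
    (homogeneousSubmodule σ R 1).smul_mem (c i) (isHomogeneous_X R i)

end LinearForm

section HyperplaneProj

variable {R σ : Type*} [CommRing R] [Fintype σ]

/-- Pullback of polynomials along `x ↦ x - c(x) • u`, which for `c ⬝ᵥ u = 1` is the projection onto
the hyperplane `c = 0` along `u`. -/
noncomputable def hyperplaneProj (c u : σ → R) : MvPolynomial σ R →ₐ[R] MvPolynomial σ R :=
  aeval fun i => X i - u i • linearForm c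

theorem hyperplaneProj_linearForm (c u d : σ → R) :
    hyperplaneProj c u (linearForm d) = linearForm (d - (d ⬝ᵥ u) • c) := by
  rw [map_sub, map_smul]
  simp [hyperplaneProj, linearForm, Fintype.linearCombination_apply, dotProduct, smul_sub,
    Finset.sum_smul, mul_smul]

theorem linearForm_dvd_sub_hyperplaneProj (c u : σ → R) (p : MvPolynomial σ R) :
    linearForm c ∣ p - hyperplaneProj c u p := by
  induction p using MvPolynomial.induction_on with
  | C r => simp [hyperplaneProj]
  | add p q hp hq => simpa only [map_add, add_sub_add_comm] using hp.add hq
  | mul_X p i hp =>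
    have hX : hyperplaneProj c u (X i) = X i - u i • linearForm c := aeval_X _ i
    have hsplit : p * X i - hyperplaneProj c u p * (X i - u i • linearForm c) =
        (p - hyperplaneProj c u p) * X i + linearForm c * (u i • hyperplaneProj c u p) := by
      simp only [smul_eq_C_mul]
      ring
    rw [map_mul, hX, hsplit]
    exact (hp.mul_right _).add (dvd_mul_right _ _)

end HyperplaneProj

section Field

variable {K σ : Type*} [Field K] [Fintype σ]

theorem irreducible_linearForm {c : σ → K} (hc : c ≠ 0) : Irreducible (linearForm c) := by
  refine irreducible_of_totalDegree_eq_one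
    ((isHomogeneous_linearForm c).totalDegree (linearForm_ne_zero hc)) fun x hx => ?_
  obtain ⟨i, hi⟩ := Function.ne_iff.mp hc
  have hxc : x ∣ c i := coeff_single_linearForm c i ▸ hx (Finsupp.single i 1)
  exact isUnit_of_dvd_unit hxc (isUnit_iff_ne_zero.mpr hi)

theorem isRelPrime_linearForm {c d : σ → K} (h : LinearIndependent K ![c, d]) :
    IsRelPrime (linearForm c) (linearForm d) := by
  have hc : c ≠ 0 := h.ne_zero 0
  refine (irreducible_linearForm hc).isRelPrime_iff_not_dvd.mpr ?_
  rintro ⟨p, hp⟩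
  have hd : constantCoeff p • c = d := by
    ext i
    rw [← coeff_single_linearForm d, hp, coeff_single_linearForm_mul, Pi.smul_apply, smul_eq_mul,
      mul_comm]
  exact (LinearIndependent.pair_iff' hc).mp h _ hd

theorem linearIndependent_pair_sub_smul {V : Type*} [AddCommGroup V] [Module K V] {a b c : V}
    (h : LinearIndependent K ![a, b, c]) (s t : K) :
    LinearIndependent K ![b - s • a, c - t • a] := by
  rw [LinearIndependent.pair_iff]
  intro x y hxy
  have hzero := Fintype.linearIndependent_iff.mp h ![-(x * s + y * t), x, y] (by
    rw [← hxy]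
    simp only [Fin.sum_univ_three, Matrix.cons_val]
    module)
  exact ⟨hzero 1, hzero 2⟩

theorem exists_dotProduct_eq_one {c : σ → K} (hc : c ≠ 0) : ∃ u, c ⬝ᵥ u = 1 := by
  classical
  obtain ⟨i, hi⟩ := Function.ne_iff.mp hc
  exact ⟨Pi.single i (c i)⁻¹, by simpa using mul_inv_cancel₀ hi⟩

theorem mulVec_surjective_of_linearIndependent_row {m : Type*} [Finite m] {M : Matrix m σ K}
    (hM : LinearIndependent K M.row) : Function.Surjective M.mulVec := by
  have := Fintype.ofFinite m
  have hrange : LinearMap.range M.mulVecLin = ⊤ :=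
    Submodule.eq_top_of_finrank_eq (by simpa [Matrix.rank] using hM.rank_matrix)
  exact LinearMap.range_eq_top.mp hrange

-- Restricting to the hyperplane `c = 0` turns the `d i` into pairwise non-proportional forms.
theorem exists_linearForm_dvd_sub_mul_prod {ι : Type*} {c : σ → K} (hc : c ≠ 0) {d : ι → σ → K}
    {s : Finset ι} (hd : ∀ i ∈ s, ∀ j ∈ s, i ≠ j → LinearIndependent K ![c, d i, d j])
    {r : MvPolynomial σ K} (hr : ∀ i ∈ s, ∃ g, linearForm c ∣ r - g * linearForm (d i)) :
    ∃ g, linearForm c ∣ r - g * ∏ i ∈ s, linearForm (d i) := by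
  obtain ⟨u, hu⟩ := exists_dotProduct_eq_one hc
  set π := hyperplaneProj c u
  have hπc : π (linearForm c) = 0 := by simp [π, hyperplaneProj_linearForm, hu]
  have hcoprime : (s : Set ι).Pairwise
      (Function.onFun IsRelPrime fun i => π (linearForm (d i))) := fun i hi j hj hij => by
    simp only [Function.onFun, π, hyperplaneProj_linearForm]
    exact isRelPrime_linearForm (linearIndependent_pair_sub_smul (hd i hi j hj hij) _ _)
  have hdvd : ∀ i ∈ s, π (linearForm (d i)) ∣ π r := by
    intro i hi
    obtain ⟨g, hg⟩ := hr i hi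
    have hπr : π r - π g * π (linearForm (d i)) = 0 := by
      simpa [hπc] using map_dvd π hg
    exact ⟨π g, by rw [mul_comm]; exact sub_eq_zero.mp hπr⟩
  obtain ⟨g, hg⟩ := Finset.prod_dvd_of_isRelPrime hcoprime hdvd
  rw [← map_prod] at hg
  set P := ∏ i ∈ s, linearForm (d i)
  have hsplit : r - g * P = (r - π r) - g * (P - π P) := by
    rw [hg]
    ring
  exact ⟨g, hsplit ▸ (linearForm_dvd_sub_hyperplaneProj c u r).sub
    ((linearForm_dvd_sub_hyperplaneProj c u P).mul_left g)⟩

end Field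

section LogNumerator

variable {R σ ι : Type*} [CommRing R] [Fintype σ]

/-- An `R`-linear map `F` sending a constant vector field `v` to the polynomial `F v` encodes the
polynomial one-form `∑ i, F eᵢ dxᵢ`. It is a logarithmic numerator for the arrangement `α` if the
rational one-form `Q⁻¹ ∑ i, F eᵢ dxᵢ`, with `Q = ∏ H, α_H`, has only logarithmic poles: along each
hyperplane, the contraction with a tangent vector is divisible by the defining form. -/
def IsLogNumerator (α : ι → σ → R) (F : (σ → R) →ₗ[R] MvPolynomial σ R) : Prop :=
  ∀ H v, α H ⬝ᵥ v = 0 → linearForm (α H) ∣ F v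

end LogNumerator

namespace IsLogNumerator

variable {K σ ι : Type*} [Field K] [Fintype σ] [Fintype ι] [DecidableEq ι] {α : ι → σ → K}
  {F : (σ → K) →ₗ[K] MvPolynomial σ K}

theorem exists_residue (hF : IsLogNumerator α F) (hne : ∀ i, α i ≠ 0)
    (hpair : ∀ i j, i ≠ j → LinearIndependent K ![α i, α j])
    (htriple : ∀ i j l, i ≠ j → i ≠ l → j ≠ l → LinearIndependent K ![α i, α j, α l]) (H : ι) :
    ∃ g, ∀ v, linearForm (α H) ∣
      F v - (α H ⬝ᵥ v) • (g * ∏ j ∈ Finset.univ.erase H, linearForm (α j)) := by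
  obtain ⟨u, hu⟩ := exists_dotProduct_eq_one (hne H)
  have hFu : ∀ v, linearForm (α H) ∣ F v - (α H ⬝ᵥ v) • F u := fun v => by
    rw [← map_smul, ← map_sub]
    exact hF H _ (by simp [dotProduct_sub, hu])
  have hmod : ∀ j ∈ Finset.univ.erase H,
      ∃ g, linearForm (α H) ∣ F u - g * linearForm (α j) := by
    intro j hj
    have hHj := hpair H j (Finset.ne_of_mem_erase hj).symm
    obtain ⟨w, hw⟩ :=
      mulVec_surjective_of_linearIndependent_row (M := Matrix.of ![α H, α j]) hHj ![1, 0]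
    have hHw : α H ⬝ᵥ w = 1 := congrFun hw 0
    obtain ⟨g, hg⟩ := hF j w (congrFun hw 1)
    refine ⟨g, dvd_sub_comm.mp ?_⟩
    simpa [hHw, hg, mul_comm] using hFu w
  obtain ⟨g, hg⟩ := exists_linearForm_dvd_sub_mul_prod (hne H)
    (fun i hi j hj hij => htriple H i j (Finset.ne_of_mem_erase hi).symm
      (Finset.ne_of_mem_erase hj).symm hij) hmod
  refine ⟨g, fun v => ?_⟩
  have hadd := (hFu v).add (hg.mul_left (C (α H ⬝ᵥ v)))
  simpa only [← smul_eq_C_mul, smul_sub, sub_add_sub_cancel] using hadd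

-- In terms of one-forms: `Q⁻¹ F = ∑ H, g_H dα_H / α_H + h`.
theorem exists_decomposition (hF : IsLogNumerator α F) (hne : ∀ i, α i ≠ 0)
    (hpair : ∀ i j, i ≠ j → LinearIndependent K ![α i, α j])
    (htriple : ∀ i j l, i ≠ j → i ≠ l → j ≠ l → LinearIndependent K ![α i, α j, α l]) :
    ∃ (g : ι → MvPolynomial σ K) (h : (σ → K) → MvPolynomial σ K), ∀ v,
      F v = ∑ H, (α H ⬝ᵥ v) • (g H * ∏ j ∈ Finset.univ.erase H, linearForm (α j)) +
        (∏ j, linearForm (α j)) * h v := by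
  choose g hg using hF.exists_residue hne hpair htriple
  have hQ : ∀ v, ∏ j, linearForm (α j) ∣
      F v - ∑ H, (α H ⬝ᵥ v) • (g H * ∏ j ∈ Finset.univ.erase H, linearForm (α j)) := by
    refine fun v => Finset.prod_dvd_of_isRelPrime
      (fun i _ j _ hij => isRelPrime_linearForm (hpair i j hij)) fun H _ => ?_
    rw [← Finset.add_sum_erase _ _ (Finset.mem_univ H), ← sub_sub]
    refine (hg H v).sub (Finset.dvd_sum fun j hj => ?_)
    have hH : H ∈ Finset.univ.erase j :=
      Finset.mem_erase.mpr ⟨(Finset.ne_of_mem_erase hj).symm, Finset.mem_univ H⟩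
    rw [smul_eq_C_mul]
    exact ((Finset.dvd_prod_of_mem (fun i => linearForm (α i)) hH).mul_left _).mul_left _
  choose h hh using hQ
  exact ⟨g, h, fun v => by rw [← hh v]; ring⟩

end IsLogNumerator

section LogDerivations

variable {R σ ι : Type*} [CommRing R] [Fintype σ]

/-- The value `θ(ℓ_c) = ∑ i, aᵢ cᵢ` of the derivation `θ = ∑ i, aᵢ ∂ᵢ`, encoded by its coefficient
tuple `a`, on the linear form `ℓ_c` with coefficient vector `c`. -/
noncomputable def derivLinearForm (c : σ → R) :
    (σ → MvPolynomial σ R) →ₗ[MvPolynomial σ R] MvPolynomial σ R :=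
  Fintype.linearCombination (MvPolynomial σ R) fun i => C (c i)

theorem derivLinearForm_apply (c : σ → R) (a : σ → MvPolynomial σ R) :
    derivLinearForm c a = ∑ i, a i * C (c i) := rfl

/-- The derivation module of an arrangement over any coefficient ring and in any finite
set of variables, encoded by coefficient tuples as in `derivModule`. -/
noncomputable def logDerivations (α : ι → σ → R) :
    Submodule (MvPolynomial σ R) (σ → MvPolynomial σ R) :=
  ⨅ H, Submodule.comap (derivLinearForm (α H)) (Ideal.span {linearForm (α H)})

theorem mem_logDerivations {α : ι → σ → R} {a : σ → MvPolynomial σ R} :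
    a ∈ logDerivations α ↔ ∀ H, linearForm (α H) ∣ derivLinearForm (α H) a := by
  simp [logDerivations, Submodule.mem_iInf, Ideal.mem_span_singleton]

/-- The constant vector field `v`, as a coefficient tuple. -/
noncomputable def constField : (σ → R) →ₗ[R] (σ → MvPolynomial σ R) :=
  (Algebra.linearMap R (MvPolynomial σ R)).compLeft σ

theorem derivLinearForm_constField (c v : σ → R) :
    derivLinearForm c (constField v) = C (c ⬝ᵥ v) := by
  simp [derivLinearForm_apply, constField, dotProduct, mul_comm]

theorem sum_smul_constField_single [DecidableEq σ] (a : σ → MvPolynomial σ R) :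
    ∑ i, a i • constField (Pi.single i (1 : R)) = a := by
  ext1 j
  simp [constField, Pi.single_apply]

variable [Fintype ι]

/-- Multiplication by the defining polynomial `∏ H, α_H`, which maps every polynomial vector field
to a logarithmic one. -/
noncomputable def definingPolySMul (α : ι → σ → R) :
    (σ → MvPolynomial σ R) →ₗ[MvPolynomial σ R] logDerivations α :=
  LinearMap.codRestrict (logDerivations α) ((∏ j, linearForm (α j)) • LinearMap.id) fun a => by
    rw [mem_logDerivations]
    intro H
    rw [LinearMap.smul_apply, LinearMap.id_apply, map_smul, smul_eq_mul]
    exact (Finset.dvd_prod_of_mem _ (Finset.mem_univ H)).mul_right _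

theorem prod_erase_smul_constField_mem [DecidableEq ι] {α : ι → σ → R} {H : ι} {v : σ → R}
    (hv : α H ⬝ᵥ v = 0) :
    (∏ j ∈ Finset.univ.erase H, linearForm (α j)) • constField v ∈ logDerivations α := by
  rw [mem_logDerivations]
  intro H'
  rw [map_smul, derivLinearForm_constField, smul_eq_mul]
  rcases eq_or_ne H' H with rfl | hne
  · simp [hv]
  · have hmem : H' ∈ Finset.univ.erase H := Finset.mem_erase.mpr ⟨hne, Finset.mem_univ H'⟩
    exact (Finset.dvd_prod_of_mem (fun j => linearForm (α j)) hmem).mul_right _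

/-- The numerator of the logarithmic one-form `Q⁻¹ ∑ i, φ(Q eᵢ) dxᵢ`, with `Q = ∏ H, α_H`, that
represents a functional `φ` on the derivation module. -/
noncomputable def logNumerator {α : ι → σ → R}
    (φ : logDerivations α →ₗ[MvPolynomial σ R] MvPolynomial σ R) :
    (σ → R) →ₗ[R] MvPolynomial σ R :=
  (φ ∘ₗ definingPolySMul α).restrictScalars R ∘ₗ constField

theorem isLogNumerator_logNumerator {α : ι → σ → R}
    (φ : logDerivations α →ₗ[MvPolynomial σ R] MvPolynomial σ R) :
    IsLogNumerator α (logNumerator φ) := by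
  classical
  intro H v hv
  have hfactor : definingPolySMul α (constField v) =
      linearForm (α H) • ⟨_, prod_erase_smul_constField_mem hv⟩ := by
    apply Subtype.ext
    change (∏ j, linearForm (α j)) • constField v = _ • _ • constField v
    rw [smul_smul, Finset.mul_prod_erase _ (fun j => linearForm (α j)) (Finset.mem_univ H)]
  refine ⟨φ ⟨_, prod_erase_smul_constField_mem hv⟩, ?_⟩
  change φ (definingPolySMul α (constField v)) = _
  rw [hfactor, map_smul, smul_eq_mul]

theorem prod_linearForm_mul_apply [DecidableEq σ] {α : ι → σ → R}
    (φ : logDerivations α →ₗ[MvPolynomial σ R] MvPolynomial σ R) (a : logDerivations α) :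
    (∏ j, linearForm (α j)) * φ a = ∑ i, a.1 i * logNumerator φ (Pi.single i 1) := by
  have ha : (∏ j, linearForm (α j)) • a =
      definingPolySMul α (∑ i, a.1 i • constField (Pi.single i 1)) := by
    rw [sum_smul_constField_single]
    rfl
  rw [← smul_eq_mul, ← map_smul, ha]
  simp [logNumerator]

end LogDerivations

section LinearPart

variable {R σ ι : Type*} [CommRing R] [Fintype σ]

/-- The linear part of the derivation `θ` with coefficient tuple `a`, as the endomorphism of the
space of linear forms sending `ℓ` to the degree one part of `θ(ℓ)`. -/
noncomputable def linearPart : (σ → MvPolynomial σ R) →ₗ[R] Module.End R (σ → R) :=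
  LinearMap.mk₂ R (fun a c i => coeff (Finsupp.single i 1) (derivLinearForm c a))
    (fun a b c => by ext; simp)
    (fun r a c => by ext; simp)
    (fun a c d => by ext; simp [derivLinearForm_apply, mul_add, Finset.sum_add_distrib])
    (fun r a c => by
      ext
      simp [derivLinearForm_apply, mul_left_comm _ (C r), ← Finset.mul_sum, coeff_C_mul])

theorem linearPart_apply_eq_smul {a : σ → MvPolynomial σ R} {c : σ → R} {q : MvPolynomial σ R}
    (h : derivLinearForm c a = linearForm c * q) : linearPart a c = constantCoeff q • c := by
  ext i
  change coeff (Finsupp.single i 1) (derivLinearForm c a) = constantCoeff q * c i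
  rw [h, coeff_single_linearForm_mul, mul_comm]

theorem constantCoeff_eq_zero_of_mem_logDerivations {α : ι → σ → R}
    (hess : Submodule.span R (Set.range α) = ⊤) {a : σ → MvPolynomial σ R}
    (ha : a ∈ logDerivations α) (i : σ) : constantCoeff (a i) = 0 := by
  classical
  have hzero : Fintype.linearCombination R (fun i => constantCoeff (a i)) = 0 := by
    refine LinearMap.ext_on_range hess fun H => ?_
    obtain ⟨q, hq⟩ := mem_logDerivations.mp ha H
    simpa [derivLinearForm_apply, Fintype.linearCombination_apply, constantCoeff_linearForm,
      mul_comm] using congrArg constantCoeff hq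
  simpa using LinearMap.congr_fun hzero (Pi.single i 1)

end LinearPart

section Functional

variable {K σ ι : Type*} [Field K] [Fintype σ] {α : ι → σ → K}

theorem exists_functional_decomposition [Fintype ι] (hne : ∀ i, α i ≠ 0)
    (hpair : ∀ i j, i ≠ j → LinearIndependent K ![α i, α j])
    (htriple : ∀ i j l, i ≠ j → i ≠ l → j ≠ l → LinearIndependent K ![α i, α j, α l])
    (φ : logDerivations α →ₗ[MvPolynomial σ K] MvPolynomial σ K) :
    ∃ (g : ι → MvPolynomial σ K) (h : σ → MvPolynomial σ K),
      ∀ (a : logDerivations α) (q : ι → MvPolynomial σ K),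
        (∀ H, derivLinearForm (α H) a = linearForm (α H) * q H) →
          φ a = ∑ H, g H * q H + ∑ i, h i * a.1 i := by
  classical
  obtain ⟨g, h, hF⟩ :=
    (isLogNumerator_logNumerator φ).exists_decomposition hne hpair htriple
  refine ⟨g, fun i => h (Pi.single i 1), fun a q hq => ?_⟩
  have hQ : ∏ j, linearForm (α j) ≠ 0 :=
    Finset.prod_ne_zero_iff.mpr fun j _ => linearForm_ne_zero (hne j)
  have hterm : ∀ H, ∑ i, a.1 i * (α H i • (g H * ∏ j ∈ Finset.univ.erase H, linearForm (α j))) =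
      (∏ j, linearForm (α j)) * (g H * q H) := fun H => by
    have hfactor :=
      Finset.mul_prod_erase Finset.univ (fun j => linearForm (α j)) (Finset.mem_univ H)
    calc
      _ = g H * (∏ j ∈ Finset.univ.erase H, linearForm (α j)) * derivLinearForm (α H) a := by
        rw [derivLinearForm_apply, Finset.mul_sum]
        refine Finset.sum_congr rfl fun i _ => ?_
        rw [smul_eq_C_mul]
        ring
      _ = (∏ j, linearForm (α j)) * (g H * q H) := by
        rw [hq, ← hfactor]
        ring
  apply mul_left_cancel₀ hQ
  rw [prod_linearForm_mul_apply]
  simp only [hF, dotProduct_single_one, mul_add, Finset.sum_add_distrib, Finset.mul_sum]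
  rw [Finset.sum_comm]
  simp only [hterm]
  congr 1
  exact Finset.sum_congr rfl fun _ _ => by ring

theorem constantCoeff_functional_eq_zero [Finite ι] (hne : ∀ i, α i ≠ 0)
    (hpair : ∀ i j, i ≠ j → LinearIndependent K ![α i, α j])
    (htriple : ∀ i j l, i ≠ j → i ≠ l → j ≠ l → LinearIndependent K ![α i, α j, α l])
    (hess : Submodule.span K (Set.range α) = ⊤)
    (φ : logDerivations α →ₗ[MvPolynomial σ K] MvPolynomial σ K) {a : logDerivations α}
    (ha : linearPart (a : σ → MvPolynomial σ K) = 0) : constantCoeff (φ a) = 0 := by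
  have := Fintype.ofFinite ι
  obtain ⟨g, h, hφ⟩ := exists_functional_decomposition hne hpair htriple φ
  choose q hq using mem_logDerivations.mp a.2
  have hq0 : ∀ H, constantCoeff (q H) = 0 := fun H => by
    have heig := linearPart_apply_eq_smul (hq H)
    rw [ha, LinearMap.zero_apply] at heig
    exact (smul_eq_zero.mp heig.symm).resolve_right (hne H)
  simp [hφ a q hq, hq0, constantCoeff_eq_zero_of_mem_logDerivations hess a.2]

theorem linearIndependent_linearPart_basis [Finite ι] {κ : Type*} (hne : ∀ i, α i ≠ 0)
    (hpair : ∀ i j, i ≠ j → LinearIndependent K ![α i, α j])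
    (htriple : ∀ i j l, i ≠ j → i ≠ l → j ≠ l → LinearIndependent K ![α i, α j, α l])
    (hess : Submodule.span K (Set.range α) = ⊤)
    (b : Module.Basis κ (MvPolynomial σ K) (logDerivations α)) :
    LinearIndependent K fun k => linearPart (b k : σ → MvPolynomial σ K) := by
  classical
  have := Module.Finite.finite_basis b
  have := Fintype.ofFinite κ
  rw [Fintype.linearIndependent_iff]
  intro c hc k
  let a : logDerivations α := ∑ i, c i • b i
  have ha : linearPart (a : σ → MvPolynomial σ K) = 0 := by simpa [a] using hc
  have hcoord : b.coord k a = C (c k) := by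
    simp [a, ← algebraMap_smul (MvPolynomial σ K) (c _) (b _), Finsupp.single_apply]
  simpa [hcoord] using constantCoeff_functional_eq_zero hne hpair htriple hess (b.coord k) ha

theorem card_le_finrank_logDerivations [Finite ι] (hne : ∀ i, α i ≠ 0) :
    Fintype.card σ ≤ Module.finrank (MvPolynomial σ K) (logDerivations α) := by
  have := Fintype.ofFinite ι
  have hQ : ∏ j, linearForm (α j) ≠ 0 :=
    Finset.prod_ne_zero_iff.mpr fun j _ => linearForm_ne_zero (hne j)
  have hinj : Function.Injective (definingPolySMul α) := fun a b hab =>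
    smul_right_injective _ hQ (congrArg Subtype.val hab)
  simpa using LinearMap.finrank_le_finrank_of_injective hinj

end Functional

section CommonEigenvectors

variable {K V ι κ : Type*} [Field K] [AddCommGroup V] [Module K V]

variable (K) in
/-- The endomorphisms having every `v i` as an eigenvector (or in their kernel). -/
def commonEigenEnd (v : ι → V) : Submodule K (Module.End K V) :=
  ⨅ i, (K ∙ v i).comap (LinearMap.applyₗ (v i))

theorem mem_commonEigenEnd {v : ι → V} {A : Module.End K V} :
    A ∈ commonEigenEnd K v ↔ ∀ i, ∃ μ : K, μ • v i = A (v i) := by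
  simp [commonEigenEnd, Submodule.mem_iInf, Submodule.mem_span_singleton]

theorem finrank_commonEigenEnd_basis_le [Fintype κ] (b : Module.Basis κ K V) :
    Module.finrank K (commonEigenEnd K b) ≤ Fintype.card κ := by
  let diag : Module.End K V →ₗ[K] κ → K := LinearMap.pi fun i => b.coord i ∘ₗ LinearMap.applyₗ (b i)
  have hinj : Function.Injective (diag.domRestrict (commonEigenEnd K b)) := by
    rw [injective_iff_map_eq_zero]
    rintro ⟨A, hA⟩ hdiag
    refine Subtype.ext (b.ext fun i => ?_)
    obtain ⟨μ, hμ⟩ := mem_commonEigenEnd.mp hA i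
    have hμ0 : μ = 0 := by simpa [diag, ← hμ] using congrFun hdiag i
    simp [← hμ, hμ0]
  simpa using LinearMap.finrank_le_finrank_of_injective hinj

theorem coord_smulRight_mem_commonEigenEnd (b : Module.Basis κ K V) (k : κ) :
    (b.coord k).smulRight (b k) ∈ commonEigenEnd K b := by
  classical
  refine mem_commonEigenEnd.mpr fun i => ?_
  rcases eq_or_ne i k with rfl | hik
  · exact ⟨1, by simp⟩
  · exact ⟨0, by simp [hik]⟩

-- By dimension, the coordinate projections of a basis chosen among the `v i` have every `v i` as
-- an eigenvector.
theorem linearIndependent_of_finrank_le_commonEigenEnd [FiniteDimensional K V] {v : ι → V}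
    (hne : ∀ i, v i ≠ 0) (hpair : ∀ i j, i ≠ j → LinearIndependent K ![v i, v j])
    (hspan : Submodule.span K (Set.range v) = ⊤)
    (hfinrank : Module.finrank K V ≤ Module.finrank K (commonEigenEnd K v)) :
    LinearIndependent K v := by
  obtain ⟨κ, e, he, hespan, heli⟩ := exists_linearIndependent' K v
  let b : Module.Basis κ K V := Module.Basis.mk heli (by rw [hespan, hspan])
  have hb : ∀ k, b k = v (e k) := fun k => by simp [b]
  have : Fintype κ := FiniteDimensional.fintypeBasisIndex b
  have hle : commonEigenEnd K v ≤ commonEigenEnd K b := fun A hA =>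
    mem_commonEigenEnd.mpr fun k => by simpa [hb] using mem_commonEigenEnd.mp hA (e k)
  have heq : commonEigenEnd K v = commonEigenEnd K b :=
    Submodule.eq_of_le_of_finrank_le hle <| (finrank_commonEigenEnd_basis_le b).trans <| by
      rwa [← Module.finrank_eq_card_basis b]
  have hsurj : Function.Surjective e := by
    intro i
    obtain ⟨k, hk⟩ : ∃ k, b.repr (v i) k ≠ 0 := by
      simpa using Finsupp.ne_iff.mp ((map_ne_zero_iff _ b.repr.injective).mpr (hne i))
    obtain ⟨μ, hμ⟩ := mem_commonEigenEnd.mp (heq ▸ coord_smulRight_mem_commonEigenEnd b k) i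
    by_contra! hi
    have hzero := LinearIndependent.pair_iff.mp (hpair i (e k) (hi k).symm) μ (-b.repr (v i) k)
      (by simp [hμ, hb])
    exact hk (neg_eq_zero.mp hzero.2)
  exact (linearIndependent_equiv (Equiv.ofBijective e ⟨he, hsurj⟩)).mp heli

end CommonEigenvectors

theorem nonfree_of_only_double_lines_general {K σ ι : Type*} [Field K] [Fintype σ] [Fintype ι]
    (α : ι → σ → K) (hne : ∀ i, α i ≠ 0)
    (hpair : ∀ i j, i ≠ j → LinearIndependent K ![α i, α j])
    (hess : Submodule.span K (Set.range α) = ⊤)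
    (htriple : ∀ i j l, i ≠ j → i ≠ l → j ≠ l → LinearIndependent K ![α i, α j, α l])
    (hfree : Module.Free (MvPolynomial σ K) (logDerivations α)) :
    Fintype.card ι = Fintype.card σ := by
  let b := Module.finBasis (MvPolynomial σ K) (logDerivations α)
  have heig : ∀ k, linearPart (b k : σ → MvPolynomial σ K) ∈ commonEigenEnd K α := fun k =>
    mem_commonEigenEnd.mpr fun H =>
      let ⟨q, hq⟩ := mem_logDerivations.mp (b k).2 H
      ⟨constantCoeff q, (linearPart_apply_eq_smul hq).symm⟩
  have hli := linearIndependent_linearPart_basis hne hpair htriple hess b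
  have hrank : Module.finrank K (σ → K) ≤ Module.finrank K (commonEigenEnd K α) := calc
    Module.finrank K (σ → K) = Fintype.card σ := Module.finrank_fintype_fun_eq_card K
    _ ≤ Module.finrank (MvPolynomial σ K) (logDerivations α) := card_le_finrank_logDerivations hne
    _ = Module.finrank K (Submodule.span K (Set.range fun k => linearPart (b k).1)) := by
      rw [finrank_span_eq_card hli, Fintype.card_fin]
    _ ≤ Module.finrank K (commonEigenEnd K α) :=
      Submodule.finrank_mono (Submodule.span_le.mpr (Set.range_subset_iff.mpr heig))
  have hα := linearIndependent_of_finrank_le_commonEigenEnd hne hpair hess hrank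
  rw [← finrank_span_eq_card hα, hess, finrank_top, Module.finrank_fintype_fun_eq_card]

theorem linForm_eq_linearForm (c : Fin 4 → ℂ) : linForm c = linearForm c := by
  simp [linForm, linearForm, Fintype.linearCombination_apply, smul_eq_C_mul]

theorem derMap_linForm (c : Fin 4 → ℂ) : derMap (linForm c) = derivLinearForm c := by
  refine LinearMap.ext fun a => ?_
  simp [derMap, linForm, derivLinearForm_apply, pderiv_X, Pi.single_apply]

theorem derivModule_eq_logDerivations {ι : Type} (α : ι → Fin 4 → ℂ) :
    derivModule α = logDerivations α := by
  simp only [derivModule, logDerivations, derMap_linForm]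
  simp only [linForm_eq_linearForm]

/-- An essential central arrangement of `k ≥ 4` distinct hyperplanes in `ℂ⁴`
having only double intersection lines (any three of the defining linear forms are linearly
independent) can be free only if `k = 4`. -/
theorem nonfree_of_only_double_lines {k : ℕ} (hk : 4 ≤ k) (α : Fin k → (Fin 4 → ℂ))
    (hne : ∀ i, α i ≠ 0)
    (hpair : ∀ i j : Fin k, i ≠ j → LinearIndependent ℂ ![α i, α j])
    (hess : Submodule.span ℂ (Set.range α) = ⊤)
    (htriple : ∀ i j l : Fin k, i ≠ j → i ≠ l → j ≠ l →
      LinearIndependent ℂ ![α i, α j, α l])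
    (hfree : Module.Free S4 ↥(derivModule α)) :
    k = 4 := by
  rw [derivModule_eq_logDerivations] at hfree
  simpa using nonfree_of_only_double_lines_general α hne hpair hess htriple hfree
end

section
/- The derivation module D(𝒜₃) of the central hyperplane arrangement 𝒜₃ in ℂ⁴ with defining equation Q₃ = x·y·z·w·(x+y)·(y+z)·(y−w)·(x−y−z+w) is not a free module over S = ℂ[x,y,z,w]. -/
open MvPolynomial

/-- The coefficient vectors of the eight linear factors of Q = xyzw(x+y)(y+z)(y-w)(x-y-z+w), defining the rigid Cynk–Szemberg octic arrangement 𝒜₃ ⊂ ℙ³. -/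
noncomputable def A3 : Fin 8 → (Fin 4 → ℂ) :=
  ![![1, 0, 0, 0],
    ![0, 1, 0, 0],
    ![0, 0, 1, 0],
    ![0, 0, 0, 1],
    ![1, 1, 0, 0],
    ![0, 1, 1, 0],
    ![0, 1, 0, -1],
    ![1, -1, -1, 1]]

/-!
Four planes of `𝒜₃` (`x`, `w`, `y + z` and `x - y - z + w`) pass through `p = [0 : 1 : -1 : 0]`, in
general position. Near such a point, write `θ(αⱼ) = qⱼ αⱼ` and normalize the forms so that
`α₀ + α₁ + α₂ + α₃ = 0`; then the `qᵢ - q₀` form a syzygy of the independent forms `α₁, α₂, α₃`.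
So, locally, the derivation module is the sum of the constant field along `p`, the Euler field and
the syzygy module of `α₁, α₂, α₃`, which needs three (Koszul) generators. Its fibre at `p` thus has
dimension at least five, whereas a free submodule of `S⁴` has rank at most four.
-/

theorem exists_dual_vectors {κ n K : Type*} [Finite κ] [DecidableEq κ] [Fintype n] [Field K]
    {a : κ → n → K} (ha : LinearIndependent K a) :
    ∃ u : κ → n → K, ∀ i j, a i ⬝ᵥ u j = if i = j then 1 else 0 := by
  classical
  have := Fintype.ofFinite κ
  obtain ⟨f, hf⟩ := (Fintype.linearCombination K a).exists_leftInverse_of_injective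
    (LinearMap.ker_eq_bot.2 ha.fintypeLinearCombination_injective)
  refine ⟨fun j k => f (fun l => if k = l then 1 else 0) j, fun i j => ?_⟩
  have hfa : f (a i) = Pi.single i 1 := by
    simpa using LinearMap.congr_fun hf (Pi.single i 1)
  rw [LinearMap.pi_apply_eq_sum_univ] at hfa
  simpa [dotProduct, Pi.single_apply, eq_comm (a := i)] using congrFun hfa j

/-- The basic syzygy `b (k + 2) e (k + 1) - b (k + 1) e (k + 2)` of three elements, one for each
`k : Fin 3` with indices read cyclically; these are the three Koszul relations. -/
def koszulSyzygy {V : Type*} [AddCommGroup V] (b : Fin 3 → V) (k : Fin 3) : Fin 3 → V :=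
  Pi.single (k + 1) (b (k + 2)) - Pi.single (k + 2) (b (k + 1))

theorem linearIndependent_koszulSyzygy {K V : Type*} [Ring K] [AddCommGroup V] [Module K V]
    {b : Fin 3 → V} (hb : LinearIndependent K b) : LinearIndependent K (koszulSyzygy b) := by
  rw [Fintype.linearIndependent_iff] at hb ⊢
  intro t ht
  have hslot (i : Fin 3) : ∑ m, koszulSyzygy t i m • b m = 0 := by
    refine Eq.trans ?_ (congrFun ht i)
    fin_cases i <;> simp [koszulSyzygy, Fin.sum_univ_three] <;> abel
  intro k
  have hcoeff := hb _ (hslot (k + 1)) (k + 2)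
  fin_cases k <;> simpa [koszulSyzygy] using hcoeff

theorem card_le_finrank_of_linearIndependent_comp {R K N V κ : Type*} [Semiring R]
    [StrongRankCondition R] [Semiring K] [StrongRankCondition K]
    [AddCommMonoid N] [Module R N] [Module.Free R N] [Module.Finite R N]
    [AddCommMonoid V] [Module K V] [Fintype κ] {φ : R →+* K} (f : N →ₛₗ[φ] V) {e : κ → N}
    (h : LinearIndependent K (f ∘ e)) : Fintype.card κ ≤ Module.finrank R N := by
  let b := Module.finBasis R N
  have hspan : Set.range (f ∘ e) ≤ Submodule.span K (Set.range (f ∘ b)) := by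
    rintro _ ⟨i, rfl⟩
    rw [Function.comp_apply, ← b.sum_repr (e i), map_sum]
    refine Submodule.sum_mem _ fun j _ => ?_
    rw [map_smulₛₗ]
    exact Submodule.smul_mem _ _ (Submodule.subset_span ⟨j, rfl⟩)
  have := Fintype.ofFinite (Set.range (f ∘ b))
  calc Fintype.card κ ≤ Fintype.card (Set.range (f ∘ b)) :=
        linearIndependent_le_span_aux' _ h _ hspan
    _ ≤ Fintype.card (Fin (Module.finrank R N)) := Fintype.card_range_le (f ∘ b)
    _ = Module.finrank R N := Fintype.card_fin _

theorem linForm_sum {κ : Type*} [Fintype κ] (a : κ → Fin 4 → ℂ) :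
    linForm (∑ j, a j) = ∑ j, linForm (a j) := by
  simp only [linForm, Finset.sum_apply, map_sum, Finset.sum_mul]
  exact Finset.sum_comm

theorem linForm_zero : linForm 0 = 0 := by simp [linForm]

theorem linForm_neg (c : Fin 4 → ℂ) : linForm (-c) = -linForm c := by simp [linForm]

theorem linForm_smul (g : ℂ) (c : Fin 4 → ℂ) : linForm (g • c) = C g * linForm c := by
  simp only [linForm, Pi.smul_apply, smul_eq_mul, C_mul, Finset.mul_sum, mul_assoc]

theorem eval_linForm (p c : Fin 4 → ℂ) : eval p (linForm c) = c ⬝ᵥ p := by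
  simp [linForm, dotProduct]

theorem derMap_sum_apply {κ : Type*} [Fintype κ] (f : κ → S4) (a : Fin 4 → S4) :
    derMap (∑ j, f j) a = ∑ j, derMap (f j) a := by
  simp only [derMap, LinearMap.coe_mk, AddHom.coe_mk, map_sum, Finset.mul_sum]
  exact Finset.sum_comm

theorem derMap_linForm_s3 (c : Fin 4 → ℂ) (a : Fin 4 → S4) :
    derMap (linForm c) a = ∑ i, C (c i) * a i := by
  simp [derMap, linForm, pderiv_X, Pi.single_apply, mul_comm]

theorem derMap_linForm_C (c v : Fin 4 → ℂ) :
    derMap (linForm c) (fun i => C (v i)) = C (c ⬝ᵥ v) := by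
  simp [derMap_linForm_s3, dotProduct]

theorem derMap_linForm_X (c : Fin 4 → ℂ) : derMap (linForm c) X = linForm c :=
  derMap_linForm_s3 c X

theorem pderiv_linForm (c : Fin 4 → ℂ) (i : Fin 4) : pderiv i (linForm c) = C (c i) := by
  simp [linForm, pderiv_X, Pi.single_apply]

theorem linForm_ne_zero {c : Fin 4 → ℂ} (hc : c ≠ 0) : linForm c ≠ 0 := by
  obtain ⟨i, hi⟩ := Function.ne_iff.1 hc
  intro h
  have hder := pderiv_linForm c i
  rw [h, map_zero, eq_comm, C_eq_zero] at hder
  exact hi hder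

/-- The gradient `(∂f/∂xᵢ)(p)` of a polynomial at the point `p`. -/
noncomputable def gradAt (p : Fin 4 → ℂ) : S4 →ₗ[ℂ] (Fin 4 → ℂ) :=
  LinearMap.pi fun i => (aeval p).toLinearMap ∘ₗ (pderiv i).toLinearMap

theorem gradAt_mul (p : Fin 4 → ℂ) (f g : S4) :
    gradAt p (f * g) = eval p f • gradAt p g + eval p g • gradAt p f := by
  ext i
  simp [gradAt]

theorem gradAt_linForm (p c : Fin 4 → ℂ) : gradAt p (linForm c) = c := by
  ext i
  simp [gradAt, pderiv_linForm]

theorem eval_eq_zero_of_sum_mul_linForm_eq_zero {κ : Type*} [Fintype κ] {p : Fin 4 → ℂ}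
    {a : κ → Fin 4 → ℂ} {f : κ → S4} (ha : LinearIndependent ℂ a) (hp : ∀ i, a i ⬝ᵥ p = 0)
    (hf : ∑ i, f i * linForm (a i) = 0) (i : κ) : eval p (f i) = 0 := by
  have hgrad : ∑ i, eval p (f i) • a i = 0 := by
    simpa [gradAt_mul, gradAt_linForm, eval_linForm, hp] using congrArg (gradAt p) hf
  exact Fintype.linearIndependent_iff.1 ha _ hgrad i

section LogCoeff

variable {ι : Type} {α : ι → Fin 4 → ℂ}

theorem mem_derivModule_iff {a : Fin 4 → S4} :
    a ∈ derivModule α ↔ ∀ K, linForm (α K) ∣ derMap (linForm (α K)) a := by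
  simp [derivModule, Submodule.mem_iInf, Ideal.mem_span_singleton]

theorem derivModule_smul {g : ι → ℂ} (hg : ∀ K, g K ≠ 0) :
    derivModule (fun K => g K • α K) = derivModule α := by
  ext a
  have hunit (K : ι) : IsUnit (C (g K) : S4) := (hg K).isUnit.map C
  have hder (K : ι) : derMap (linForm (g K • α K)) a = C (g K) * derMap (linForm (α K)) a := by
    simp [derMap_linForm_s3, Finset.mul_sum, mul_assoc]
  simp only [mem_derivModule_iff, hder, (hunit _).dvd_mul_left]
  simp only [linForm_smul, (hunit _).mul_left_dvd]

/-- The quotient `θ(α_K) / α_K` of a derivation `θ ∈ D(𝒜)`, as a linear function of `θ`. -/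
noncomputable def logCoeff {K : ι} (hK : α K ≠ 0) : derivModule α →ₗ[S4] S4 :=
  (LinearEquiv.toSpanNonzeroSingleton S4 S4 _ (linForm_ne_zero hK)).symm.toLinearMap ∘ₗ
    (derMap (linForm (α K))).restrict fun _ ha => (Submodule.mem_iInf _).1 ha K

theorem logCoeff_mul_linForm {K : ι} (hK : α K ≠ 0) (θ : derivModule α) :
    logCoeff hK θ * linForm (α K) = derMap (linForm (α K)) θ :=
  congrArg Subtype.val ((LinearEquiv.toSpanNonzeroSingleton S4 S4 _
    (linForm_ne_zero hK)).apply_symm_apply _)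

theorem logCoeff_eq {K : ι} (hK : α K ≠ 0) {θ : derivModule α} {q : S4}
    (hq : derMap (linForm (α K)) θ = q * linForm (α K)) : logCoeff hK θ = q :=
  mul_right_cancel₀ (linForm_ne_zero hK) ((logCoeff_mul_linForm hK θ).trans hq)

end LogCoeff

section OffProduct

variable {ι : Type} [Fintype ι]

open Classical in
/-- The product of the forms that do not vanish at `p`. Multiplication by it turns a derivation
that is logarithmic along the hyperplanes through `p` into an element of `D(𝒜)`. -/
noncomputable def offProduct (α : ι → Fin 4 → ℂ) (p : Fin 4 → ℂ) : S4 :=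
  ∏ K with α K ⬝ᵥ p ≠ 0, linForm (α K)

theorem eval_offProduct_ne_zero (α : ι → Fin 4 → ℂ) (p : Fin 4 → ℂ) :
    eval p (offProduct α p) ≠ 0 := by
  simp [offProduct, eval_linForm, Finset.prod_ne_zero_iff]

theorem offProduct_smul_mem_derivModule {α : ι → Fin 4 → ℂ} {p : Fin 4 → ℂ} {a : Fin 4 → S4}
    (ha : ∀ K, α K ⬝ᵥ p = 0 → linForm (α K) ∣ derMap (linForm (α K)) a) :
    offProduct α p • a ∈ derivModule α := by
  refine mem_derivModule_iff.2 fun K => ?_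
  rw [map_smul, smul_eq_mul]
  by_cases hK : α K ⬝ᵥ p = 0
  · exact (ha K hK).mul_left _
  · have hdvd : linForm (α K) ∣ offProduct α p :=
      Finset.dvd_prod_of_mem (fun K => linForm (α K)) (by simpa using hK)
    exact hdvd.mul_right _

end OffProduct

/-- The point `[p]` of `ℙ³` lies on exactly the four hyperplanes `H 0, …, H 3` of the arrangement,
and these are in general position at `p`: any three of them have independent forms. -/
structure IsGenericQuadruplePoint {ι : Type} (α : ι → Fin 4 → ℂ) (p : Fin 4 → ℂ)
    (H : Fin 4 ↪ ι) : Prop where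
  ne_zero : p ≠ 0
  dotProduct_eq_zero_iff : ∀ K, α K ⬝ᵥ p = 0 ↔ K ∈ Set.range H
  linearIndependent : ∀ j : Fin 4, LinearIndependent ℂ fun i : Fin 3 => α (H (j.succAbove i))

/-- The model of five independent vectors in the fibre of a derivation module at a quadruple point
`p` through which the forms `b` pass: the images of a constant field along `p`, of the Euler field,
and of the three Koszul fields, in the coordinates of `IsGenericQuadruplePoint.fibreMap`. -/
noncomputable def fibreFamily (p : Fin 4 → ℂ) (b : Fin 3 → Fin 4 → ℂ) :
    Fin 2 ⊕ Fin 3 → ((Fin 4 → ℂ) × ℂ) × (Fin 3 → Fin 4 → ℂ) :=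
  Sum.elim (LinearMap.inl ℂ _ _ ∘ ![(p, 0), (p, 1)]) (LinearMap.inr ℂ _ _ ∘ koszulSyzygy b)

theorem linearIndependent_fibreFamily {p : Fin 4 → ℂ} {b : Fin 3 → Fin 4 → ℂ} (hp : p ≠ 0)
    (hb : LinearIndependent ℂ b) : LinearIndependent ℂ (fibreFamily p b) := by
  refine linearIndependent_inl_union_inr' (LinearIndependent.pair_iff.2 fun s t hst => ?_)
    (linearIndependent_koszulSyzygy hb)
  obtain ⟨hsp, ht⟩ := Prod.ext_iff.1 hst
  have ht : t = 0 := by simpa using ht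
  exact ⟨by simpa [ht, hp] using hsp, ht⟩

namespace IsGenericQuadruplePoint

variable {ι : Type} {α : ι → Fin 4 → ℂ} {p : Fin 4 → ℂ} {H : Fin 4 ↪ ι}

theorem dotProduct_eq_zero (h : IsGenericQuadruplePoint α p H) (j : Fin 4) : α (H j) ⬝ᵥ p = 0 :=
  (h.dotProduct_eq_zero_iff _).2 ⟨j, rfl⟩

theorem form_ne_zero (h : IsGenericQuadruplePoint α p H) (j : Fin 4) : α (H j) ≠ 0 := by
  obtain ⟨i, hi⟩ := Fin.exists_succAbove_eq (x := j) (y := j + 1) (by simp)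
  exact hi ▸ (h.linearIndependent (j + 1)).ne_zero i

theorem smul (h : IsGenericQuadruplePoint α p H) {g : ι → ℂ} (hg : ∀ K, g K ≠ 0) :
    IsGenericQuadruplePoint (fun K => g K • α K) p H where
  ne_zero := h.ne_zero
  dotProduct_eq_zero_iff K := by simpa [hg K] using h.dotProduct_eq_zero_iff K
  linearIndependent j :=
    (h.linearIndependent j).units_smul fun i => Units.mk0 _ (hg (H (j.succAbove i)))

theorem exists_sum_smul_eq_zero (h : IsGenericQuadruplePoint α p H) :
    ∃ g : Fin 4 → ℂ, (∀ j, g j ≠ 0) ∧ ∑ j, g j • α (H j) = 0 := by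
  let M : Matrix (Fin 4) (Fin 4) ℂ := Matrix.of fun j => α (H j)
  have hdet : M.det = 0 :=
    Matrix.exists_mulVec_eq_zero_iff.1 ⟨p, h.ne_zero, funext h.dotProduct_eq_zero⟩
  obtain ⟨g, hg, hgM⟩ := Matrix.exists_vecMul_eq_zero_iff.2 hdet
  have hsum : ∑ j, g j • α (H j) = 0 := by rw [← hgM, Matrix.vecMul_eq_sum]; rfl
  refine ⟨g, fun j hj => hg ?_, hsum⟩
  rw [Fin.sum_univ_succAbove _ j, hj, zero_smul, zero_add] at hsum
  have hrest := Fintype.linearIndependent_iff.1 (h.linearIndependent j) _ hsum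
  exact funext fun i => (Fin.eq_self_or_eq_succAbove j i).elim (fun hi => hi ▸ hj)
    fun ⟨k, hk⟩ => hk ▸ hrest k

theorem exists_smul_sum_eq_zero (h : IsGenericQuadruplePoint α p H) :
    ∃ g : ι → ℂ, (∀ K, g K ≠ 0) ∧ ∑ j, g (H j) • α (H j) = 0 := by
  obtain ⟨g, hg, hsum⟩ := h.exists_sum_smul_eq_zero
  refine ⟨Function.extend H g 1, fun K => ?_, by simpa [H.injective.extend_apply] using hsum⟩
  by_cases hK : ∃ j, H j = K
  · obtain ⟨j, rfl⟩ := hK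
    simpa [H.injective.extend_apply] using hg j
  · simp [Function.extend_apply' _ _ _ hK]

/-- The difference `θ(αᵢ) / αᵢ - θ(α₀) / α₀` for the forms through the quadruple point. When the
four forms sum to zero, these differences are the coefficients of a syzygy of `α₁, α₂, α₃`. -/
noncomputable def relCoeff (h : IsGenericQuadruplePoint α p H) (i : Fin 3) :
    derivModule α →ₗ[S4] S4 :=
  logCoeff (h.form_ne_zero i.succ) - logCoeff (h.form_ne_zero 0)

theorem sum_relCoeff_mul_linForm (h : IsGenericQuadruplePoint α p H)
    (hsum : ∑ j, α (H j) = 0) (θ : derivModule α) :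
    ∑ i : Fin 3, h.relCoeff i θ * linForm (α (H i.succ)) = 0 := by
  have hforms : ∑ j, linForm (α (H j)) = 0 := by
    rw [← linForm_sum, hsum, linForm_zero]
  have hder : ∑ j, logCoeff (h.form_ne_zero j) θ * linForm (α (H j)) = 0 := by
    simp only [logCoeff_mul_linForm, ← derMap_sum_apply, hforms]
    simp [derMap]
  rw [Fin.sum_univ_succ] at hforms hder
  simp only [relCoeff, LinearMap.sub_apply, sub_mul, Finset.sum_sub_distrib, ← Finset.mul_sum]
  linear_combination hder - logCoeff (h.form_ne_zero 0) θ * hforms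

theorem eval_relCoeff (h : IsGenericQuadruplePoint α p H) (hsum : ∑ j, α (H j) = 0)
    (i : Fin 3) (θ : derivModule α) : eval p (h.relCoeff i θ) = 0 :=
  eval_eq_zero_of_sum_mul_linForm_eq_zero (h.linearIndependent 0)
    (fun i => h.dotProduct_eq_zero i.succ) (h.sum_relCoeff_mul_linForm hsum θ) i

/-- Coordinates on the fibre of `D(𝒜)` at the quadruple point `p`: the value of `θ`, the value of
`θ(α₀) / α₀`, and the gradients of the three syzygy coefficients `relCoeff`. The gradients are
linear over evaluation at `p` because the coefficients vanish there. -/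
noncomputable def fibreMap (h : IsGenericQuadruplePoint α p H) (hsum : ∑ j, α (H j) = 0) :
    derivModule α →ₛₗ[eval p] ((Fin 4 → ℂ) × ℂ) × (Fin 3 → Fin 4 → ℂ) where
  toFun θ := ((fun i => eval p (θ.1 i), eval p (logCoeff (h.form_ne_zero 0) θ)),
    fun i => gradAt p (h.relCoeff i θ))
  map_add' θ η := by ext <;> simp
  map_smul' s θ := by ext <;> simp [gradAt_mul, h.eval_relCoeff hsum]

theorem exists_fibreMap_eq [Finite ι] (h : IsGenericQuadruplePoint α p H)
    (hsum : ∑ j, α (H j) = 0) {a q : Fin 4 → S4}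
    (hq : ∀ j, derMap (linForm (α (H j))) a = q j * linForm (α (H j))) :
    ∃ θ, h.fibreMap hsum θ =
      ((fun i => eval p (a i), eval p (q 0)), fun i => gradAt p (q i.succ - q 0)) := by
  have := Fintype.ofFinite ι
  have hP := eval_offProduct_ne_zero α p
  set P := offProduct α p
  have hmem : P • a ∈ derivModule α := offProduct_smul_mem_derivModule fun K hK => by
    obtain ⟨j, rfl⟩ := (h.dotProduct_eq_zero_iff K).1 hK
    exact ⟨q j, by rw [hq, mul_comm]⟩
  let θ : derivModule α := ⟨P • a, hmem⟩
  have hcoeff (j : Fin 4) : logCoeff (h.form_ne_zero j) θ = P * q j :=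
    logCoeff_eq _ (by rw [map_smul, hq, smul_eq_mul, mul_assoc])
  have hrel (i : Fin 3) : h.relCoeff i θ = P * (q i.succ - q 0) := by
    rw [relCoeff, LinearMap.sub_apply, hcoeff, hcoeff, mul_sub]
  have hzero (i : Fin 3) : eval p (q i.succ - q 0) = 0 := by
    simpa only [hrel, map_mul, mul_eq_zero, hP, false_or] using h.eval_relCoeff hsum i θ
  have hval : h.fibreMap hsum θ = eval p P •
      ((fun i => eval p (a i), eval p (q 0)), fun i => gradAt p (q i.succ - q 0)) := by
    refine Prod.ext (Prod.ext ?_ ?_) ?_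
    · ext i; simp [fibreMap, θ]
    · simp [fibreMap, hcoeff]
    · ext1 i
      have hgrad : gradAt p (h.relCoeff i θ) = eval p P • gradAt p (q i.succ - q 0) := by
        rw [hrel, gradAt_mul, hzero, zero_smul, add_zero]
      exact hgrad
  exact ⟨C (eval p P)⁻¹ • θ, by rw [map_smulₛₗ, hval, eval_C, inv_smul_smul₀ hP]⟩

theorem exists_fibreMap_const [Finite ι] (h : IsGenericQuadruplePoint α p H)
    (hsum : ∑ j, α (H j) = 0) : ∃ θ, h.fibreMap hsum θ = ((p, 0), 0) := by
  obtain ⟨θ, hθ⟩ := h.exists_fibreMap_eq hsum (a := fun i => C (p i)) (q := 0) fun j => by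
    simp [derMap_linForm_C, h.dotProduct_eq_zero]
  exact ⟨θ, hθ.trans (by ext <;> simp)⟩

theorem exists_fibreMap_euler [Finite ι] (h : IsGenericQuadruplePoint α p H)
    (hsum : ∑ j, α (H j) = 0) : ∃ θ, h.fibreMap hsum θ = ((p, 1), 0) := by
  obtain ⟨θ, hθ⟩ := h.exists_fibreMap_eq hsum (a := X) (q := 1) fun j => by
    simp [derMap_linForm_X]
  exact ⟨θ, hθ.trans (by ext <;> simp)⟩

theorem exists_fibreMap_koszul [Finite ι] (h : IsGenericQuadruplePoint α p H)
    (hsum : ∑ j, α (H j) = 0) (k : Fin 3) :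
    ∃ θ, h.fibreMap hsum θ = (0, koszulSyzygy (fun i : Fin 3 => α (H i.succ)) k) := by
  let b : Fin 3 → Fin 4 → ℂ := fun i => α (H i.succ)
  obtain ⟨u, hu⟩ := exists_dual_vectors (a := b) (h.linearIndependent 0)
  let v : Fin 4 → ℂ := u (k + 1) - u (k + 2)
  have huv (i : Fin 3) :
      b i ⬝ᵥ v = (if i = k + 1 then 1 else 0) - (if i = k + 2 then 1 else 0) := by
    rw [dotProduct_sub, hu, hu]
  have hb (i : Fin 3) :
      linForm (b (k + 1)) * linForm (b (k + 2)) * C (b i ⬝ᵥ v) =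
        linForm (koszulSyzygy b k i) * linForm (b i) := by
    rw [huv]
    fin_cases k <;> fin_cases i <;> simp [koszulSyzygy, linForm_zero, linForm_neg] <;> ring
  have h0 : α (H 0) ⬝ᵥ v = 0 := by
    rw [Fin.sum_univ_succ, add_eq_zero_iff_eq_neg] at hsum
    rw [hsum, neg_dotProduct, sum_dotProduct, Finset.sum_congr rfl fun i _ => huv i]
    simp
  -- The field `b (k + 1) * b (k + 2) * (∂_{k + 1} - ∂_{k + 2})`, in coordinates dual to `b`, kills
  -- `b k` and, since the four forms sum to zero, also the form of `H 0`.
  obtain ⟨θ, hθ⟩ := h.exists_fibreMap_eq hsum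
    (a := (linForm (b (k + 1)) * linForm (b (k + 2))) • fun i => C (v i))
    (q := Fin.cons 0 fun i => linForm (koszulSyzygy b k i)) fun j => by
      rw [map_smul, derMap_linForm_C, smul_eq_mul]
      cases j using Fin.cases with
      | zero => simp [h0]
      | succ i => exact hb i
  refine ⟨θ, hθ.trans ?_⟩
  have hk : b (k + 1) ⬝ᵥ p = 0 := h.dotProduct_eq_zero _
  ext <;> simp [eval_linForm, gradAt_linForm, hk, b]

theorem exists_fibreMap_eq_fibreFamily [Finite ι] (h : IsGenericQuadruplePoint α p H)
    (hsum : ∑ j, α (H j) = 0) (x : Fin 2 ⊕ Fin 3) :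
    ∃ θ, h.fibreMap hsum θ = fibreFamily p (fun i => α (H i.succ)) x := by
  rcases x with x | k
  · fin_cases x
    · exact h.exists_fibreMap_const hsum
    · exact h.exists_fibreMap_euler hsum
  · exact h.exists_fibreMap_koszul hsum k

theorem five_le_finrank [Finite ι] [Module.Free S4 (derivModule α)]
    (h : IsGenericQuadruplePoint α p H) (hsum : ∑ j, α (H j) = 0) :
    5 ≤ Module.finrank S4 (derivModule α) := by
  choose θ hθ using h.exists_fibreMap_eq_fibreFamily hsum
  have hind : LinearIndependent ℂ (h.fibreMap hsum ∘ θ) := by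
    rw [show h.fibreMap hsum ∘ θ = _ from funext hθ]
    exact linearIndependent_fibreFamily h.ne_zero (h.linearIndependent 0)
  exact card_le_finrank_of_linearIndependent_comp (h.fibreMap hsum) hind

end IsGenericQuadruplePoint

theorem not_free_A3_general {ι : Type} [Finite ι] {α : ι → Fin 4 → ℂ} {p : Fin 4 → ℂ}
    {H : Fin 4 ↪ ι} (h : IsGenericQuadruplePoint α p H) :
    ¬ Module.Free S4 (derivModule α) := by
  intro hfree
  obtain ⟨g, hg, hsum⟩ := h.exists_smul_sum_eq_zero
  rw [← derivModule_smul hg] at hfree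
  have hlower := (h.smul hg).five_le_finrank hsum
  have hupper := Submodule.finrank_le (derivModule fun K => g K • α K)
  rw [Module.finrank_fin_fun] at hupper
  omega

theorem isGenericQuadruplePoint_A3 :
    IsGenericQuadruplePoint A3 ![0, 1, -1, 0] ⟨![0, 3, 5, 7], by decide⟩ where
  ne_zero h := by simpa using congrFun h 1
  dotProduct_eq_zero_iff K := by
    fin_cases K <;> simp [A3, dotProduct, Fin.sum_univ_four]
  linearIndependent j := by
    rw [Fintype.linearIndependent_iff]
    intro g hg
    fin_cases j <;>
      simp [A3, funext_iff, Fin.sum_univ_three, Fin.succAbove, Fin.forall_fin_succ] at hg ⊢ <;>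
      grind

/-- The derivation module of 𝒜₃ is not a free `S`-module. -/
theorem not_free_A3 : ¬ Module.Free S4 ↥(derivModule A3) :=
  not_free_A3_general isGenericQuadruplePoint_A3
end
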